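/- arXiv:1508.01619 — 4 statements merged into one kernel-verified Lean document; each statement's English description precedes it below -/
import Mathlib

section
/- For every 0 < a < b < 1 one has ξ'(a)·ζ'(b) − ξ'(b)·ζ'(a) > 0. -/
/-!
In divergence form the equation `ℒu = 0` says that the flux `r^{N-1} u'` has derivative
`r^{N-1} u`, so the fluxes of the positive solutions `ξ` and `ζ` are both strictly increasing on
`(0,1)`. As `ξ` increases and `ζ` decreases, the flux `p` of `ξ` satisfies `0 < p(a) < p(b)`, and
the flux `q` of `ζ` satisfies `q(a) < q(b) < 0`. Hence `p(b) (-q(a)) > p(a) (-q(b))`, and dividing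
by `a^{N-1} b^{N-1}` gives the claim.
-/

open Real Set Filter Topology

/-- Context: the two fundamental solutions `ξ`, `ζ` of `ℒu = -u'' - ((N-1)/r) u' + u = 0`
on `(0,1)` together with their basic properties (Proposition 2.1 of the paper). -/
structure GreenData (N : ℕ) where
  xi : ℝ → ℝ
  zeta : ℝ → ℝ
  xi_smooth : ContDiffOn ℝ 2 xi (Set.Icc 0 1)
  zeta_smooth : ContDiffOn ℝ 2 zeta (Set.Ioc 0 1)
  xi_pos : ∀ r ∈ Set.Icc (0:ℝ) 1, 0 < xi r
  zeta_pos : ∀ r ∈ Set.Ioc (0:ℝ) 1, 0 < zeta r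
  xi_ode : ∀ r ∈ Set.Ioo (0:ℝ) 1,
    -(deriv (deriv xi) r) - ((N : ℝ) - 1) / r * deriv xi r + xi r = 0
  zeta_ode : ∀ r ∈ Set.Ioo (0:ℝ) 1,
    -(deriv (deriv zeta) r) - ((N : ℝ) - 1) / r * deriv zeta r + zeta r = 0
  xi_deriv_zero : deriv xi 0 = 0
  zeta_deriv_one : deriv zeta 1 = 0
  xi_mono : StrictMonoOn xi (Set.Icc 0 1)
  xi_bdd : ∃ M : ℝ, ∀ r ∈ Set.Icc (0:ℝ) 1, xi r ≤ M
  zeta_anti : StrictAntiOn zeta (Set.Ioc 0 1)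
  wronskian : ∀ r ∈ Set.Ioc (0:ℝ) 1,
    r ^ (N - 1) * (deriv xi r * zeta r - xi r * deriv zeta r) = 1
  xi_lim : Filter.Tendsto xi (nhdsWithin 0 (Set.Ioi 0)) (nhds (1 / ((N : ℝ) - 2)))
  zeta_lim : Filter.Tendsto (fun r => r ^ (N - 2) * zeta r)
    (nhdsWithin 0 (Set.Ioi 0)) (nhds 1)
  zeta_deriv_lim : Filter.Tendsto (fun r => r ^ (N - 1) * deriv zeta r)
    (nhdsWithin 0 (Set.Ioi 0)) (nhds (-((N : ℝ) - 2)))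

namespace GreenData

variable {N : ℕ}

/-- The function `ξ_{[a,b]}` of the paper. -/
noncomputable def xiI (d : GreenData N) (a b : ℝ) : ℝ → ℝ :=
  if a = 0 then
    (if b = 1 then d.xi else fun r => d.xi r / deriv d.xi b)
  else if b = 1 then
    fun r => deriv d.xi a * d.zeta r - d.xi r * deriv d.zeta a
  else
    fun r => (deriv d.xi a * d.zeta r - d.xi r * deriv d.zeta a) /
      Real.sqrt (deriv d.xi a * deriv d.zeta b - deriv d.xi b * deriv d.zeta a)

/-- The function `ζ_{[a,b]}` of the paper. -/
noncomputable def zetaI (d : GreenData N) (a b : ℝ) : ℝ → ℝ :=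
  if a = 0 then
    (if b = 1 then d.zeta
     else fun r => deriv d.xi b * d.zeta r - d.xi r * deriv d.zeta b)
  else if b = 1 then
    fun r => -(d.zeta r / deriv d.zeta a)
  else
    fun r => (deriv d.xi b * d.zeta r - d.xi r * deriv d.zeta b) /
      Real.sqrt (deriv d.xi a * deriv d.zeta b - deriv d.xi b * deriv d.zeta a)

/-- The reflection law `ξ'_{[a,b]}(s)/ξ_{[a,b]}(s) + ζ'_{[a,b]}(s)/ζ_{[a,b]}(s) = 0`. -/
def ReflectionAt (d : GreenData N) (a b s : ℝ) : Prop :=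
  deriv (d.xiI a b) s / d.xiI a b s + deriv (d.zetaI a b) s / d.zetaI a b s = 0

/-- The Green function `G_{[a,b]}(r,s)`. -/
noncomputable def G (d : GreenData N) (a b r s : ℝ) : ℝ :=
  if r ≤ s then s ^ (N - 1) * d.xiI a b r * d.zetaI a b s
  else s ^ (N - 1) * d.xiI a b s * d.zetaI a b r

end GreenData

/-- `sbar` is the function associating to `0 ≤ a < b ≤ 1` the unique point
`s̄(a,b) ∈ (a,b)` satisfying the reflection law. -/
def IsSBar {N : ℕ} (d : GreenData N) (sbar : ℝ → ℝ → ℝ) : Prop :=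
  ∀ a b : ℝ, 0 ≤ a → a < b → b ≤ 1 →
    sbar a b ∈ Set.Ioo a b ∧ d.ReflectionAt a b (sbar a b) ∧
    ∀ s ∈ Set.Ioo a b, d.ReflectionAt a b s → s = sbar a b

/-- The map `M_∞^{(j)}` of the paper, with `α_j = s̄(β_{j-1},β_j)`. -/
noncomputable def Minf {N : ℕ} (d : GreenData N) (sbar : ℝ → ℝ → ℝ)
    (β : ℕ → ℝ) (j : ℕ) : ℝ :=
  (1 / (β j) ^ (N - 1)) *
    (1 / (deriv d.xi (β j) * d.zeta (sbar (β j) (β (j + 1))) -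
            d.xi (sbar (β j) (β (j + 1))) * deriv d.zeta (β j)) -
     1 / (deriv d.xi (β j) * d.zeta (sbar (β (j - 1)) (β j)) -
            d.xi (sbar (β (j - 1)) (β j)) * deriv d.zeta (β j)))

/-- Extension of a `(k-1)`-tuple `(β₁,…,β_{k-1})` by the conventions `β₀ = 0`, `β_k = 1`. -/
noncomputable def extendB (k : ℕ) (β : Fin (k - 1) → ℝ) : ℕ → ℝ := fun j =>
  if hj : 1 ≤ j ∧ j ≤ k - 1 then β ⟨j - 1, by omega⟩
  else if j = 0 then 0 else 1

/-- The open simplex `T = {0 = β₀ < β₁ < ⋯ < β_{k-1} < β_k = 1}` as a subset of `ℝ^{k-1}`. -/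
def TSet (k : ℕ) : Set (Fin (k - 1) → ℝ) :=
  {β | ∀ j < k, extendB k β j < extendB k β (j + 1)}


/-- For a solution of `ℒu = 0` on `(0,1)`, the equation in divergence form reads
`(r^{N-1} u')' = r^{N-1} u`. -/
lemma hasDerivAt_flux {N : ℕ} (hN : 3 ≤ N) {u : ℝ → ℝ}
    (hu : ContDiffOn ℝ 2 u (Set.Ioo 0 1))
    (hode : ∀ r ∈ Set.Ioo (0:ℝ) 1,
      -(deriv (deriv u) r) - ((N : ℝ) - 1) / r * deriv u r + u r = 0)
    {r : ℝ} (hr : r ∈ Set.Ioo (0:ℝ) 1) :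
    HasDerivAt (fun r => r ^ (N - 1) * deriv u r) (r ^ (N - 1) * u r) r := by
  have hc : ContDiffOn ℝ 1 (deriv u) (Set.Ioo 0 1) :=
    ((contDiffOn_succ_iff_deriv_of_isOpen (n := 1) isOpen_Ioo).1 (by rwa [one_add_one_eq_two])).2.2
  have hd : HasDerivAt (deriv u) (deriv (deriv u) r) r :=
    (((hc.differentiableOn one_ne_zero) r hr).differentiableAt
      (isOpen_Ioo.mem_nhds hr)).hasDerivAt
  have h := (hasDerivAt_pow (N - 1) r).mul hd
  obtain ⟨m, rfl⟩ : ∃ m, N = m + 2 := ⟨N - 2, by omega⟩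
  have hr0 : r ≠ 0 := hr.1.ne'
  have e : deriv (deriv u) r = u r - ((m : ℝ) + 1) / r * deriv u r := by
    have := hode r hr
    push_cast at this
    linear_combination -this
  refine h.congr_deriv ?_
  rw [e]
  have e1 : m + 2 - 1 = m + 1 := rfl
  simp only [e1, Nat.add_sub_cancel]
  push_cast
  field_simp
  ring

theorem statement1 {N : ℕ} (hN : 3 ≤ N) (d : GreenData N) :
    ∀ a b : ℝ, 0 < a → a < b → b < 1 →
      0 < deriv d.xi a * deriv d.zeta b - deriv d.xi b * deriv d.zeta a := by
  intro a b ha hab hb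
  have hp := fun r hr => hasDerivAt_flux hN (r := r)
    (d.xi_smooth.mono Set.Ioo_subset_Icc_self) d.xi_ode hr
  have hq := fun r hr => hasDerivAt_flux hN (r := r)
    (d.zeta_smooth.mono Set.Ioo_subset_Ioc_self) d.zeta_ode hr
  have hpmono : StrictMonoOn (fun r => r ^ (N - 1) * deriv d.xi r) (Set.Ioo 0 1) := by
    refine strictMonoOn_of_deriv_pos (convex_Ioo 0 1)
      (fun r hr => (hp r hr).continuousAt.continuousWithinAt) fun r hr => ?_
    rw [interior_Ioo] at hr
    rw [(hp r hr).deriv]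
    exact mul_pos (pow_pos hr.1 _) (d.xi_pos r (Set.Ioo_subset_Icc_self hr))
  have hqmono : StrictMonoOn (fun r => r ^ (N - 1) * deriv d.zeta r) (Set.Ioo 0 1) := by
    refine strictMonoOn_of_deriv_pos (convex_Ioo 0 1)
      (fun r hr => (hq r hr).continuousAt.continuousWithinAt) fun r hr => ?_
    rw [interior_Ioo] at hr
    rw [(hq r hr).deriv]
    exact mul_pos (pow_pos hr.1 _) (d.zeta_pos r (Set.Ioo_subset_Ioc_self hr))
  have hxi : ∀ r ∈ Set.Ioo (0:ℝ) 1, 0 ≤ deriv d.xi r := fun r hr => by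
    rw [← derivWithin_of_mem_nhds (Icc_mem_nhds hr.1 hr.2)]
    exact d.xi_mono.monotoneOn.derivWithin_nonneg
  have hzeta : ∀ r ∈ Set.Ioo (0:ℝ) 1, deriv d.zeta r ≤ 0 := fun r hr => by
    rw [← derivWithin_of_mem_nhds (Ioc_mem_nhds hr.1 hr.2)]
    exact d.zeta_anti.antitoneOn.derivWithin_nonpos
  have ha1 : a ∈ Set.Ioo (0:ℝ) 1 := ⟨ha, hab.trans hb⟩
  have hb1 : b ∈ Set.Ioo (0:ℝ) 1 := ⟨ha.trans hab, hb⟩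
  -- Strict signs at `a` and `b` follow from the weak ones at a point left of `a`, resp. right of `b`.
  have hpa : 0 < a ^ (N - 1) * deriv d.xi a := by
    have hm : a / 2 ∈ Set.Ioo (0:ℝ) 1 := ⟨by linarith, by linarith⟩
    exact (mul_nonneg (pow_nonneg hm.1.le _) (hxi _ hm)).trans_lt
      (hpmono hm ha1 (by linarith))
  have hqb : b ^ (N - 1) * deriv d.zeta b < 0 := by
    have hm : (b + 1) / 2 ∈ Set.Ioo (0:ℝ) 1 := ⟨by linarith, by linarith⟩
    exact (hqmono hb1 hm (by linarith)).trans_le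
      (mul_nonpos_of_nonneg_of_nonpos (pow_nonneg hm.1.le _) (hzeta _ hm))
  have hpab := hpmono ha1 hb1 hab
  have hqab := hqmono ha1 hb1 hab
  simp only at hpab hqab
  have hpos : 0 < a ^ (N - 1) * b ^ (N - 1) := mul_pos (pow_pos ha _) (pow_pos hb1.1 _)
  refine pos_of_mul_pos_right (a := a ^ (N - 1) * b ^ (N - 1)) ?_ hpos.le
  have := mul_lt_mul'' hpab (neg_lt_neg hqab) hpa.le (neg_pos.2 hqb).le
  linarith
end

section
/- For every 0 ≤ a < b ≤ 1, the map s ↦ (ξ'_{[a,b]}(s)/ξ_{[a,b]}(s))² is strictly increasing on (a,b) and the map s ↦ (ζ'_{[a,b]}(s)/ζ_{[a,b]}(s))² is strictly decreasing on (a,b). -/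
/-!
Up to a nonzero constant, `ξ_{[a,b]}` is a positive solution `u` of `u'' = u - ((N-1)/r) u'` whose
flux `r^{N-1} u'` tends to `0` at `a`, and `ζ_{[a,b]}` is one with `u' → 0` at `b`. Since
`(r^{N-1} u')' = r^{N-1} u > 0`, the flux is strictly increasing, so `u' > 0` in the first case and
`u' < 0` in the second (`PosSol.deriv_pos`, `PosSol.deriv_neg`).

The energy `W = r^{N-1} u² (u'/u)' = r^{N-1} (u² - u'²) - (N-1) r^{N-2} u u'` satisfies
`W' = (N-1) r^{N-3} u u'` (`PosSol.hasDerivAt_energy`). In the first case `W` increases from a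
nonnegative limit at `a`, in the second it decreases to a nonnegative limit at `b`; either way
`W > 0`, hence `u'/u` is strictly increasing. As `u'/u` is positive in the first case and negative
in the second, its square is strictly increasing, respectively strictly decreasing.

The normalizing constants are nonzero by the same sign information on `u'`. The only delicate
boundary value is `ζ'(r) → 0` as `r → 1⁻`, see `GreenData.tendsto_deriv_zeta_one`.
-/

open Real Set Filter Topology

/-! ### Monotonicity and boundary limits -/

/-- A strictly increasing function on `(a, b)` with nonnegative right limit at `a` is positive. -/
lemma pos_of_strictMonoOn_of_tendsto {a b L : ℝ} {f : ℝ → ℝ} (hf : StrictMonoOn f (Ioo a b))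
    (hlim : Tendsto f (𝓝[>] a) (𝓝 L)) (hL : 0 ≤ L) : ∀ r ∈ Ioo a b, 0 < f r := by
  intro r hr
  have hm : (a + r) / 2 ∈ Ioo a b := ⟨by linarith [hr.1], by linarith [hr.1, hr.2]⟩
  have h1 : f ((a + r) / 2) < f r := hf hm hr (by linarith [hr.1])
  have h2 : L ≤ f ((a + r) / 2) := by
    refine le_of_tendsto hlim ?_
    filter_upwards [Ioo_mem_nhdsGT hm.1] with x hx
    exact (hf ⟨hx.1, hx.2.trans hm.2⟩ hm hx.2).le
  linarith

/-- A strictly decreasing function on `(a, b)` with nonnegative left limit at `b` is positive. -/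
lemma pos_of_strictAntiOn_of_tendsto {a b L : ℝ} {f : ℝ → ℝ} (hf : StrictAntiOn f (Ioo a b))
    (hlim : Tendsto f (𝓝[<] b) (𝓝 L)) (hL : 0 ≤ L) : ∀ r ∈ Ioo a b, 0 < f r := by
  intro r hr
  have hm : (r + b) / 2 ∈ Ioo a b := ⟨by linarith [hr.1, hr.2], by linarith [hr.2]⟩
  have h1 : f ((r + b) / 2) < f r := hf hr hm (by linarith [hr.2])
  have h2 : L ≤ f ((r + b) / 2) := by
    refine le_of_tendsto hlim ?_
    filter_upwards [Ioo_mem_nhdsLT hm.2] with x hx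
    exact (hf hm ⟨hm.1.trans hx.1, hx.2⟩ hx.1).le
  linarith

lemma strictMonoOn_Ioo_of_hasDerivAt {a b : ℝ} {f f' : ℝ → ℝ}
    (h : ∀ r ∈ Ioo a b, HasDerivAt f (f' r) r) (hpos : ∀ r ∈ Ioo a b, 0 < f' r) :
    StrictMonoOn f (Ioo a b) := by
  refine strictMonoOn_of_deriv_pos (convex_Ioo a b)
    (fun r hr => (h r hr).continuousAt.continuousWithinAt) ?_
  intro r hr
  rw [interior_Ioo] at hr
  rw [(h r hr).deriv]
  exact hpos r hr

lemma strictAntiOn_Ioo_of_hasDerivAt {a b : ℝ} {f f' : ℝ → ℝ}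
    (h : ∀ r ∈ Ioo a b, HasDerivAt f (f' r) r) (hneg : ∀ r ∈ Ioo a b, f' r < 0) :
    StrictAntiOn f (Ioo a b) := by
  refine strictAntiOn_of_deriv_neg (convex_Ioo a b)
    (fun r hr => (h r hr).continuousAt.continuousWithinAt) ?_
  intro r hr
  rw [interior_Ioo] at hr
  rw [(h r hr).deriv]
  exact hneg r hr

/-! ### Positive solutions of the radial equation -/

/-- `u` is a positive solution of `u'' = u - ((N-1)/r) u'` on `(a, b)` with `u' = v`,
where the dimension is written `N = n + 3` to avoid truncated subtraction in exponents. -/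
structure PosSol (n : ℕ) (a b : ℝ) (u v : ℝ → ℝ) : Prop where
  deriv_u : ∀ r ∈ Ioo a b, HasDerivAt u (v r) r
  deriv_v : ∀ r ∈ Ioo a b, HasDerivAt v (u r - ((n : ℝ) + 2) / r * v r) r
  pos : ∀ r ∈ Ioo a b, 0 < u r

/-- `r^{N-1} u² (u'/u)'`, expressed without second derivatives (`N = n + 3`). -/
def energy (n : ℕ) (u v : ℝ → ℝ) (r : ℝ) : ℝ :=
  r ^ (n + 2) * (u r ^ 2 - v r ^ 2) - ((n : ℝ) + 2) * r ^ (n + 1) * (u r * v r)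

namespace PosSol

variable {n : ℕ} {a b : ℝ} {u v : ℝ → ℝ}

/-- Divergence form of the equation: `(r^{N-1} u')' = r^{N-1} u`. -/
lemma hasDerivAt_flux (h : PosSol n a b u v) (ha : 0 ≤ a) (r : ℝ) (hr : r ∈ Ioo a b) :
    HasDerivAt (fun r => r ^ (n + 2) * v r) (r ^ (n + 2) * u r) r := by
  have hr0 : r ≠ 0 := (ha.trans_lt hr.1).ne'
  refine ((hasDerivAt_pow (n + 2) r).mul (h.deriv_v r hr)).congr_deriv ?_
  simp only [Nat.add_succ_sub_one]
  push_cast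
  field_simp
  ring

/-- All quadratic terms but one cancel: the energy has derivative `(N-1) r^{N-3} u u'`. -/
lemma hasDerivAt_energy (h : PosSol n a b u v) (ha : 0 ≤ a) (r : ℝ) (hr : r ∈ Ioo a b) :
    HasDerivAt (energy n u v) (((n : ℝ) + 2) * r ^ n * (u r * v r)) r := by
  have hr0 : r ≠ 0 := (ha.trans_lt hr.1).ne'
  have hu := h.deriv_u r hr
  have hv := h.deriv_v r hr
  have h1 := (hasDerivAt_pow (n + 2) r).mul ((hu.pow 2).sub (hv.pow 2))
  have h2 := ((hasDerivAt_pow (n + 1) r).const_mul ((n : ℝ) + 2)).mul (hu.mul hv)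
  refine (h1.sub h2).congr_deriv ?_
  simp only [Nat.add_succ_sub_one, Nat.add_sub_cancel, Pi.pow_apply, Pi.sub_apply, Pi.mul_apply]
  push_cast
  field_simp
  ring

lemma strictMonoOn_flux (h : PosSol n a b u v) (ha : 0 ≤ a) :
    StrictMonoOn (fun r => r ^ (n + 2) * v r) (Ioo a b) :=
  strictMonoOn_Ioo_of_hasDerivAt (h.hasDerivAt_flux ha) fun r hr =>
    mul_pos (pow_pos (ha.trans_lt hr.1) _) (h.pos r hr)

/-- `(u'/u)'` has the sign of the energy. -/
lemma strictMonoOn_ratio (h : PosSol n a b u v) (ha : 0 ≤ a)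
    (hE : ∀ r ∈ Ioo a b, 0 < energy n u v r) : StrictMonoOn (fun r => v r / u r) (Ioo a b) := by
  refine strictMonoOn_Ioo_of_hasDerivAt
    (fun r hr => (h.deriv_v r hr).div (h.deriv_u r hr) (h.pos r hr).ne') fun r hr => ?_
  have hr0 : 0 < r := ha.trans_lt hr.1
  refine div_pos ?_ (pow_pos (h.pos r hr) 2)
  refine pos_of_mul_pos_right (a := r ^ (n + 2)) ?_ (pow_pos hr0 _).le
  have e := hE r hr
  unfold energy at e
  refine e.trans_eq ?_
  field_simp
  ring

/-- A positive solution with vanishing flux at the left end point is increasing. -/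
lemma deriv_pos (h : PosSol n a b u v) (ha : 0 ≤ a) {B : ℝ} (hB : a = 0 ∨ B = 0)
    (hv : Tendsto v (𝓝[>] a) (𝓝 B)) : ∀ r ∈ Ioo a b, 0 < v r := by
  have hid : Tendsto (fun r : ℝ => r) (𝓝[>] a) (𝓝 a) := tendsto_id.mono_left nhdsWithin_le_nhds
  intro r hr
  have := pos_of_strictMonoOn_of_tendsto (h.strictMonoOn_flux ha) ((hid.pow (n + 2)).mul hv)
    (by rcases hB with rfl | rfl <;> simp) r hr
  exact pos_of_mul_pos_right this (pow_pos (ha.trans_lt hr.1) _).le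

/-- A positive solution with vanishing derivative at the right end point is decreasing. -/
lemma deriv_neg (h : PosSol n a b u v) (ha : 0 ≤ a)
    (hv : Tendsto v (𝓝[<] b) (𝓝 0)) : ∀ r ∈ Ioo a b, v r < 0 := by
  have hid : Tendsto (fun r : ℝ => r) (𝓝[<] b) (𝓝 b) := tendsto_id.mono_left nhdsWithin_le_nhds
  intro r hr
  have := pos_of_strictAntiOn_of_tendsto (h.strictMonoOn_flux ha).neg
    ((hid.pow (n + 2)).mul hv).neg (by simp) r hr
  have hp : 0 < r ^ (n + 2) := pow_pos (ha.trans_lt hr.1) _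
  have h2 : 0 < r ^ (n + 2) * (- v r) := by simpa using this
  linarith [pos_of_mul_pos_right h2 hp.le]

lemma tendsto_energy {l : Filter ℝ} {c A B : ℝ} (hc : Tendsto (fun r : ℝ => r) l (𝓝 c))
    (hu : Tendsto u l (𝓝 A)) (hv : Tendsto v l (𝓝 B)) :
    Tendsto (energy n u v) l
      (𝓝 (c ^ (n + 2) * (A ^ 2 - B ^ 2) - ((n : ℝ) + 2) * c ^ (n + 1) * (A * B))) :=
  ((hc.pow _).mul ((hu.pow 2).sub (hv.pow 2))).sub (((hc.pow _).const_mul _).mul (hu.mul hv))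

lemma strictMonoOn_sq (h : PosSol n a b u v) (ha : 0 ≤ a) {A B : ℝ} (hB : a = 0 ∨ B = 0)
    (hu : Tendsto u (𝓝[>] a) (𝓝 A)) (hv : Tendsto v (𝓝[>] a) (𝓝 B)) :
    StrictMonoOn (fun r => (v r / u r) ^ 2) (Ioo a b) := by
  have hpos := h.deriv_pos ha hB hv
  have hmono : StrictMonoOn (energy n u v) (Ioo a b) := by
    refine strictMonoOn_Ioo_of_hasDerivAt (h.hasDerivAt_energy ha) fun r hr => ?_
    have := ha.trans_lt hr.1
    have := h.pos r hr
    have := hpos r hr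
    positivity
  have hE := pos_of_strictMonoOn_of_tendsto hmono
    (tendsto_energy (tendsto_id.mono_left nhdsWithin_le_nhds) hu hv)
    (by rcases hB with rfl | rfl <;> simp; positivity)
  intro r hr s hs hrs
  exact pow_lt_pow_left₀ (h.strictMonoOn_ratio ha hE hr hs hrs)
    (div_pos (hpos r hr) (h.pos r hr)).le two_ne_zero

lemma strictAntiOn_sq (h : PosSol n a b u v) (ha : 0 ≤ a) (hb : 0 ≤ b) {A : ℝ}
    (hu : Tendsto u (𝓝[<] b) (𝓝 A)) (hv : Tendsto v (𝓝[<] b) (𝓝 0)) :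
    StrictAntiOn (fun r => (v r / u r) ^ 2) (Ioo a b) := by
  have hneg := h.deriv_neg ha hv
  have hanti : StrictAntiOn (energy n u v) (Ioo a b) := by
    refine strictAntiOn_Ioo_of_hasDerivAt (h.hasDerivAt_energy ha) fun r hr => ?_
    have := ha.trans_lt hr.1
    exact mul_neg_of_pos_of_neg (by positivity) (mul_neg_of_pos_of_neg (h.pos r hr) (hneg r hr))
  have hE := pos_of_strictAntiOn_of_tendsto hanti
    (tendsto_energy (tendsto_id.mono_left nhdsWithin_le_nhds) hu hv)
    (by simp; positivity)
  intro r hr s hs hrs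
  have h1 := h.strictMonoOn_ratio ha hE hr hs hrs
  have h2 : v s / u s < 0 := div_neg_of_neg_of_pos (hneg s hs) (h.pos s hs)
  dsimp only at h1 ⊢
  nlinarith

end PosSol

/-! ### The solutions `ξ`, `ζ` and `ξ'(c) ζ - ξ ζ'(c)` -/

lemma contDiffAt_two_hasDerivAt {f : ℝ → ℝ} {r : ℝ} (h : ContDiffAt ℝ 2 f r) :
    HasDerivAt f (deriv f r) r ∧ HasDerivAt (deriv f) (deriv (deriv f) r) r :=
  ⟨(h.differentiableAt (by norm_num)).hasDerivAt,
    ((h.derivWithin (m := 1) (by norm_num)).differentiableAt (by norm_num)).hasDerivAt⟩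

/-- `(w'/w)²` is unchanged when `w` is multiplied by a nonzero constant. -/
lemma sq_ratio_scale {w u v : ℝ → ℝ} {c a b : ℝ} (hc : c ≠ 0) (hw : w = fun r => c * u r)
    (hu : ∀ r ∈ Ioo a b, HasDerivAt u (v r) r) :
    EqOn (fun r => (v r / u r) ^ 2) (fun s => (deriv w s / w s) ^ 2) (Ioo a b) := by
  intro r hr
  have : deriv w r = c * v r := by rw [hw]; exact ((hu r hr).const_mul c).deriv
  simp only [this]
  simp only [hw, mul_div_mul_left _ _ hc]

namespace GreenData

variable {n : ℕ} (d : GreenData (n + 3))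

lemma xi_hasDerivAt {r : ℝ} (hr : r ∈ Ioo (0 : ℝ) 1) : HasDerivAt d.xi (deriv d.xi r) r ∧
    HasDerivAt (deriv d.xi) (d.xi r - ((n : ℝ) + 2) / r * deriv d.xi r) r := by
  have h := contDiffAt_two_hasDerivAt (d.xi_smooth.contDiffAt (Icc_mem_nhds hr.1 hr.2))
  refine ⟨h.1, ?_⟩
  have e := d.xi_ode r hr
  push_cast at e
  convert h.2 using 1
  linear_combination e

lemma zeta_hasDerivAt {r : ℝ} (hr : r ∈ Ioo (0 : ℝ) 1) :
    HasDerivAt d.zeta (deriv d.zeta r) r ∧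
    HasDerivAt (deriv d.zeta) (d.zeta r - ((n : ℝ) + 2) / r * deriv d.zeta r) r := by
  have h := contDiffAt_two_hasDerivAt (d.zeta_smooth.contDiffAt (Ioc_mem_nhds hr.1 hr.2))
  refine ⟨h.1, ?_⟩
  have e := d.zeta_ode r hr
  push_cast at e
  convert h.2 using 1
  linear_combination e

lemma posSol_xi {a b : ℝ} (ha : 0 ≤ a) (hb : b ≤ 1) : PosSol n a b d.xi (deriv d.xi) where
  deriv_u _ hr := (d.xi_hasDerivAt ⟨ha.trans_lt hr.1, hr.2.trans_le hb⟩).1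
  deriv_v _ hr := (d.xi_hasDerivAt ⟨ha.trans_lt hr.1, hr.2.trans_le hb⟩).2
  pos r hr := d.xi_pos r ⟨(ha.trans_lt hr.1).le, (hr.2.trans_le hb).le⟩

lemma posSol_zeta {a b : ℝ} (ha : 0 ≤ a) (hb : b ≤ 1) :
    PosSol n a b d.zeta (deriv d.zeta) where
  deriv_u _ hr := (d.zeta_hasDerivAt ⟨ha.trans_lt hr.1, hr.2.trans_le hb⟩).1
  deriv_v _ hr := (d.zeta_hasDerivAt ⟨ha.trans_lt hr.1, hr.2.trans_le hb⟩).2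
  pos r hr := d.zeta_pos r ⟨ha.trans_lt hr.1, (hr.2.trans_le hb).le⟩

lemma tendsto_xi_left : Tendsto d.xi (𝓝[>] 0) (𝓝 (d.xi 0)) := by
  have h := (d.xi_smooth.continuousOn 0 (by simp)).tendsto
  exact h.mono_left (nhdsWithin_le_of_mem (Icc_mem_nhdsGT zero_lt_one))

/-- At an end point of `[0, 1]` the derivative has a one-sided limit; the value of `deriv` there
may be a junk value, so the limit is the derivative within `[0, 1]`. -/
lemma tendsto_deriv_xi {c : ℝ} (hc : c ∈ Icc (0 : ℝ) 1) :
    Tendsto (deriv d.xi) (𝓝[Ioo 0 1] c) (𝓝 (derivWithin d.xi (Icc 0 1) c)) := by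
  have h := ((d.xi_smooth.continuousOn_derivWithin (uniqueDiffOn_Icc zero_lt_one)
    (by norm_num)) c hc).tendsto
  refine (h.mono_left (nhdsWithin_mono _ Ioo_subset_Icc_self)).congr' ?_
  filter_upwards [self_mem_nhdsWithin] with r hr
  exact derivWithin_of_mem_nhds (Icc_mem_nhds hr.1 hr.2)

lemma tendsto_deriv_xi_zero :
    Tendsto (deriv d.xi) (𝓝[>] 0) (𝓝 (derivWithin d.xi (Icc 0 1) 0)) := by
  have := d.tendsto_deriv_xi (c := 0) (by simp)
  rwa [nhdsWithin_Ioo_eq_nhdsGT zero_lt_one] at this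

lemma deriv_xi_pos {r : ℝ} (hr : r ∈ Ioo (0 : ℝ) 1) : 0 < deriv d.xi r :=
  (d.posSol_xi le_rfl le_rfl).deriv_pos le_rfl (Or.inl rfl) d.tendsto_deriv_xi_zero r hr

lemma tendsto_zeta_one : Tendsto d.zeta (𝓝[<] 1) (𝓝 (d.zeta 1)) := by
  have h := (d.zeta_smooth.continuousOn 1 (by simp)).tendsto
  refine h.mono_left (nhdsWithin_le_of_mem ?_)
  filter_upwards [Ioo_mem_nhdsLT (zero_lt_one' ℝ)] with x hx using ⟨hx.1, hx.2.le⟩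

/-- `ζ'(r) → 0` as `r → 1⁻`. The hypothesis `deriv ζ 1 = 0` alone does not say this, since it
also holds when the two-sided derivative fails to exist; but the Wronskian at `1` gives
`ξ'(1) ζ(1) = 1`, and the limit of the Wronskian identity gives the claim. -/
lemma tendsto_deriv_zeta_one : Tendsto (deriv d.zeta) (𝓝[<] 1) (𝓝 0) := by
  have hw1 := d.wronskian 1 (by simp)
  rw [d.zeta_deriv_one] at hw1
  simp only [one_pow, one_mul, mul_zero, sub_zero] at hw1
  have hne : deriv d.xi 1 ≠ 0 := by
    intro h0; rw [h0] at hw1; simp at hw1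
  have hdiff : DifferentiableAt ℝ d.xi 1 := differentiableAt_of_deriv_ne_zero hne
  have hdw : derivWithin d.xi (Icc 0 1) 1 = deriv d.xi 1 :=
    hdiff.derivWithin (uniqueDiffOn_Icc zero_lt_one 1 (by simp))
  have hxi' := d.tendsto_deriv_xi (c := 1) (by simp)
  rw [nhdsWithin_Ioo_eq_nhdsLT zero_lt_one, hdw] at hxi'
  have hxi : Tendsto d.xi (𝓝[<] 1) (𝓝 (d.xi 1)) :=
    (d.xi_smooth.continuousOn 1 (by simp)).tendsto.mono_left
      (nhdsWithin_le_of_mem (Icc_mem_nhdsLT zero_lt_one))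
  have hid : Tendsto (fun r : ℝ => r) (𝓝[<] 1) (𝓝 1) := tendsto_id.mono_left nhdsWithin_le_nhds
  have hx1 : d.xi 1 ≠ 0 := (d.xi_pos 1 (by simp)).ne'
  have hlim := ((hxi'.mul d.tendsto_zeta_one).sub
    ((hid.pow (n + 2)).inv₀ (by simp))).div hxi hx1
  have hz : (deriv d.xi 1 * d.zeta 1 - (1 ^ (n + 2))⁻¹) / d.xi 1 = 0 := by
    rw [hw1]; simp
  rw [hz] at hlim
  refine hlim.congr' ?_
  filter_upwards [Ioo_mem_nhdsLT (zero_lt_one' ℝ)] with r hr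
  have hw : r ^ (n + 2) * (deriv d.xi r * d.zeta r - d.xi r * deriv d.zeta r) = 1 :=
    d.wronskian r ⟨hr.1, hr.2.le⟩
  have hx : d.xi r ≠ 0 := (d.xi_pos r ⟨hr.1.le, hr.2.le⟩).ne'
  have hr0 : r ≠ 0 := hr.1.ne'
  simp only [Pi.div_apply]
  field_simp
  linear_combination hw

lemma deriv_zeta_neg {r : ℝ} (hr : r ∈ Ioo (0 : ℝ) 1) : deriv d.zeta r < 0 :=
  (d.posSol_zeta le_rfl le_rfl).deriv_neg le_rfl d.tendsto_deriv_zeta_one r hr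

/-- The solution `ξ'(c) ζ - ξ ζ'(c)`, whose derivative vanishes at `c`. -/
noncomputable def neumann (c r : ℝ) : ℝ := deriv d.xi c * d.zeta r - d.xi r * deriv d.zeta c

/-- The derivative of `d.neumann c`. -/
noncomputable def neumann' (c r : ℝ) : ℝ :=
  deriv d.xi c * deriv d.zeta r - deriv d.xi r * deriv d.zeta c

lemma neumann_hasDerivAt (c : ℝ) {r : ℝ} (hr : r ∈ Ioo (0 : ℝ) 1) :
    HasDerivAt (d.neumann c) (d.neumann' c r) r ∧
    HasDerivAt (d.neumann' c) (d.neumann c r - ((n : ℝ) + 2) / r * d.neumann' c r) r := by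
  have hx := d.xi_hasDerivAt hr
  have hz := d.zeta_hasDerivAt hr
  refine ⟨(hz.1.const_mul _).sub (hx.1.mul_const _), ?_⟩
  refine ((hz.2.const_mul (deriv d.xi c)).sub (hx.2.mul_const (deriv d.zeta c))).congr_deriv ?_
  simp only [neumann, neumann']
  ring

lemma posSol_neumann {a b c : ℝ} (ha : 0 ≤ a) (hb : b ≤ 1) (hc : c ∈ Ioo (0 : ℝ) 1) :
    PosSol n a b (d.neumann c) (d.neumann' c) where
  deriv_u _ hr := (d.neumann_hasDerivAt c ⟨ha.trans_lt hr.1, hr.2.trans_le hb⟩).1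
  deriv_v _ hr := (d.neumann_hasDerivAt c ⟨ha.trans_lt hr.1, hr.2.trans_le hb⟩).2
  pos r hr := by
    have h1 := d.deriv_xi_pos hc
    have h2 := d.deriv_zeta_neg hc
    have h3 := (d.posSol_xi ha hb).pos r hr
    have h4 := (d.posSol_zeta ha hb).pos r hr
    have := mul_pos h1 h4
    have := mul_pos h3 (neg_pos.2 h2)
    unfold neumann
    linarith

lemma tendsto_neumann {c : ℝ} (hc : c ∈ Ioo (0 : ℝ) 1) :
    Tendsto (d.neumann c) (𝓝 c) (𝓝 (d.neumann c c)) :=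
  (d.neumann_hasDerivAt c hc).1.continuousAt

lemma tendsto_neumann' {c : ℝ} (hc : c ∈ Ioo (0 : ℝ) 1) :
    Tendsto (d.neumann' c) (𝓝 c) (𝓝 0) := by
  have h : Tendsto (d.neumann' c) (𝓝 c) (𝓝 (d.neumann' c c)) :=
    (d.neumann_hasDerivAt c hc).2.continuousAt
  simpa [neumann'] using h

/-- The normalizing constant under the square root is positive: it is the derivative at `b` of
the solution with vanishing derivative at `a`. -/
lemma neumann'_pos {a b : ℝ} (ha : 0 < a) (hab : a < b) (hb : b < 1) :
    0 < d.neumann' a b :=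
  (d.posSol_neumann ha.le le_rfl ⟨ha, hab.trans hb⟩).deriv_pos ha.le (Or.inr rfl)
    ((d.tendsto_neumann' ⟨ha, hab.trans hb⟩).mono_left nhdsWithin_le_nhds) b ⟨hab, hb⟩

/-! ### The functions `ξ_{[a,b]}` and `ζ_{[a,b]}` -/

lemma xiI_strictMonoOn (a b : ℝ) (ha : 0 ≤ a) (hab : a < b) (hb : b ≤ 1) :
    StrictMonoOn (fun s => (deriv (d.xiI a b) s / d.xiI a b s) ^ 2) (Ioo a b) := by
  rcases ha.eq_or_lt with rfl | ha0
  · obtain ⟨c, hc, hw⟩ : ∃ c : ℝ, c ≠ 0 ∧ d.xiI 0 b = fun r => c * d.xi r := by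
      by_cases hb1 : b = 1
      · exact ⟨1, one_ne_zero, by simp [xiI, hb1]⟩
      · refine ⟨(deriv d.xi b)⁻¹,
          inv_ne_zero (d.deriv_xi_pos ⟨hab, lt_of_le_of_ne hb hb1⟩).ne', ?_⟩
        funext r
        simp only [xiI, hb1, if_true, if_false]
        ring
    have h := d.posSol_xi le_rfl hb
    exact (h.strictMonoOn_sq le_rfl (Or.inl rfl) d.tendsto_xi_left d.tendsto_deriv_xi_zero).congr
      (sq_ratio_scale hc hw h.deriv_u)
  · obtain ⟨c, hc, hw⟩ : ∃ c : ℝ, c ≠ 0 ∧ d.xiI a b = fun r => c * d.neumann a r := by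
      by_cases hb1 : b = 1
      · exact ⟨1, one_ne_zero, by simp [xiI, neumann, hb1, ha0.ne']⟩
      · refine ⟨(√(d.neumann' a b))⁻¹, inv_ne_zero
          (Real.sqrt_pos.2 (d.neumann'_pos ha0 hab (lt_of_le_of_ne hb hb1))).ne', ?_⟩
        funext r
        simp only [xiI, hb1, ha0.ne', if_false, neumann, neumann']
        ring
    have ha' : a ∈ Ioo (0 : ℝ) 1 := ⟨ha0, hab.trans_le hb⟩
    have h := d.posSol_neumann ha hb ha'
    exact (h.strictMonoOn_sq ha (Or.inr rfl)
      ((d.tendsto_neumann ha').mono_left nhdsWithin_le_nhds)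
      ((d.tendsto_neumann' ha').mono_left nhdsWithin_le_nhds)).congr
      (sq_ratio_scale hc hw h.deriv_u)

lemma zetaI_strictAntiOn (a b : ℝ) (ha : 0 ≤ a) (hab : a < b) (hb : b ≤ 1) :
    StrictAntiOn (fun s => (deriv (d.zetaI a b) s / d.zetaI a b s) ^ 2) (Ioo a b) := by
  rcases hb.eq_or_lt with rfl | hb1
  · obtain ⟨c, hc, hw⟩ : ∃ c : ℝ, c ≠ 0 ∧ d.zetaI a 1 = fun r => c * d.zeta r := by
      by_cases ha0 : a = 0
      · exact ⟨1, one_ne_zero, by simp [zetaI, ha0]⟩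
      · refine ⟨-(deriv d.zeta a)⁻¹, neg_ne_zero.2
          (inv_ne_zero (d.deriv_zeta_neg ⟨lt_of_le_of_ne ha (Ne.symm ha0), hab⟩).ne), ?_⟩
        funext r
        simp only [zetaI, ha0, if_true, if_false]
        ring
    have h := d.posSol_zeta ha le_rfl
    exact (h.strictAntiOn_sq ha zero_le_one d.tendsto_zeta_one d.tendsto_deriv_zeta_one).congr
      (sq_ratio_scale hc hw h.deriv_u)
  · obtain ⟨c, hc, hw⟩ : ∃ c : ℝ, c ≠ 0 ∧ d.zetaI a b = fun r => c * d.neumann b r := by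
      by_cases ha0 : a = 0
      · exact ⟨1, one_ne_zero, by funext r; simp [zetaI, neumann, ha0, hb1.ne]⟩
      · refine ⟨(√(d.neumann' a b))⁻¹, inv_ne_zero (Real.sqrt_pos.2
          (d.neumann'_pos (lt_of_le_of_ne ha (Ne.symm ha0)) hab hb1)).ne', ?_⟩
        funext r
        simp only [zetaI, hb1.ne, ha0, if_false, neumann, neumann']
        ring
    have hb' : b ∈ Ioo (0 : ℝ) 1 := ⟨ha.trans_lt hab, hb1⟩
    have h := d.posSol_neumann ha hb hb'
    exact (h.strictAntiOn_sq ha hb'.1.le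
      ((d.tendsto_neumann hb').mono_left nhdsWithin_le_nhds)
      ((d.tendsto_neumann' hb').mono_left nhdsWithin_le_nhds)).congr
      (sq_ratio_scale hc hw h.deriv_u)

end GreenData

theorem statement3 {N : ℕ} (hN : 3 ≤ N) (d : GreenData N)
    (a b : ℝ) (ha : 0 ≤ a) (hab : a < b) (hb : b ≤ 1) :
    StrictMonoOn (fun s => (deriv (d.xiI a b) s / d.xiI a b s) ^ 2) (Set.Ioo a b) ∧
    StrictAntiOn (fun s => (deriv (d.zetaI a b) s / d.zetaI a b s) ^ 2) (Set.Ioo a b) := by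
  obtain ⟨n, rfl⟩ := Nat.exists_eq_add_of_le' hN
  exact ⟨d.xiI_strictMonoOn a b ha hab hb, d.zetaI_strictAntiOn a b ha hab hb⟩
end

section
/- For every ε > 0 there exists δ > 0 such that for all 0 ≤ a < b ≤ 1 with b − a > ε one has b − s̄(a,b) > δ and s̄(a,b) − a > δ. -/
/-!
Write `m = N - 1`, and let `u = ξ_{[a,b]}`, `v = ζ_{[a,b]}` up to positive constants. Both are
positive solutions of `u'' = u - (m/r) u'`, equivalently `(r^m u')' = r^m u`, with `r^m u' = 0` at
`r = a` and `v' = 0` at `r = b`. Comparing derivatives gives, for `s ∈ (a,b)`,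

* `u'(s) ≤ (s - a) u(s)`               (`IsPosSol.deriv_le`),
* `(s - a)^N / (N + 1) u(s) ≤ s^m u'(s)` (`IsPosSol.le_deriv`),
* `(b - s) v(s) ≤ -v'(s)`              (`IsPosSol.le_neg_deriv`),
* `-s^m v'(s) ≤ (b - s) v(s)`          (`IsPosSol.neg_deriv_le`).

At `s = s̄(a,b)` the reflection law says `u'/u = -v'/v`, hence `b - s ≤ s - a` and
`(s - a)^N / (N + 1) ≤ b - s`. If `b - a > ε`, the first inequality yields `s - a > ε/2`, and the
second one yields `b - s > (ε/2)^N / (N + 1)`. All estimates on the left side are weighted by `r^m`,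
so that the singular endpoint `a = 0` needs no separate treatment.

`ξ` and `ζ` are only smooth up to the boundary from inside, so their derivatives are taken as
`derivWithin`; the Wronskian identity at `r = 1` shows that these agree with the two-sided values
prescribed there.
-/

open Real Set Filter Topology

/-! ### Estimates for positive solutions of the radial equation -/

/-- `u` is a nonnegative solution of `u'' = u - (m/r) u'` on `(a,b)`, with derivative `u1`, both
continuous up to the endpoints. -/
structure IsPosSol (m : ℕ) (a b : ℝ) (u u1 : ℝ → ℝ) : Prop where
  cont : ContinuousOn u (Icc a b)
  cont1 : ContinuousOn u1 (Icc a b)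
  hd : ∀ r ∈ Ioo a b, HasDerivAt u (u1 r) r
  hd1 : ∀ r ∈ Ioo a b, HasDerivAt u1 (u r - m / r * u1 r) r
  nonneg : ∀ r ∈ Ioo a b, 0 ≤ u r

/-- Monotonicity from a pointwise `HasDerivAt` on the open interval. -/
lemma le_of_hasDerivAt_nonneg {a b : ℝ} {f f' : ℝ → ℝ} (hc : ContinuousOn f (Icc a b))
    (hd : ∀ r ∈ Ioo a b, HasDerivAt f (f' r) r) (hn : ∀ r ∈ Ioo a b, 0 ≤ f' r)
    {x y : ℝ} (hx : a ≤ x) (hxy : x ≤ y) (hy : y ≤ b) : f x ≤ f y := by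
  have hmono : MonotoneOn f (Icc a b) := by
    apply monotoneOn_of_deriv_nonneg (convex_Icc a b) hc
    · intro r hr
      rw [interior_Icc] at hr
      exact (hd r hr).differentiableAt.differentiableWithinAt
    · intro r hr
      rw [interior_Icc] at hr
      rw [(hd r hr).deriv]
      exact hn r hr
  exact hmono ⟨hx, hxy.trans hy⟩ ⟨hx.trans hxy, hy⟩ hxy

namespace IsPosSol

variable {m : ℕ} {a b : ℝ} {u u1 : ℝ → ℝ}

/-- The divergence form `(r^m u')' = r^m u` of the equation. -/
lemma hasDerivAt_flux (h : IsPosSol m a b u u1) (ha : 0 ≤ a) {r : ℝ} (hr : r ∈ Ioo a b) :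
    HasDerivAt (fun r => r ^ m * u1 r) (r ^ m * u r) r := by
  have hr0 : 0 < r := ha.trans_lt hr.1
  have := (hasDerivAt_pow m r).mul (h.hd1 r hr)
  refine this.congr_deriv ?_
  rcases m with _ | k
  · simp
  · field_simp
    simp [pow_succ]
    ring

lemma flux_cont (h : IsPosSol m a b u u1) : ContinuousOn (fun r => r ^ m * u1 r) (Icc a b) :=
  (continuous_pow m).continuousOn.mul h.cont1

lemma flux_mono (h : IsPosSol m a b u u1) (ha : 0 ≤ a)
    {x y : ℝ} (hx : a ≤ x) (hxy : x ≤ y) (hy : y ≤ b) : x ^ m * u1 x ≤ y ^ m * u1 y :=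
  le_of_hasDerivAt_nonneg h.flux_cont (fun _ hr => h.hasDerivAt_flux ha hr)
    (fun r hr => mul_nonneg (pow_nonneg (ha.trans hr.1.le) m) (h.nonneg r hr)) hx hxy hy

lemma deriv_nonneg (h : IsPosSol m a b u u1) (ha : 0 ≤ a) (h0 : a ^ m * u1 a = 0)
    {r : ℝ} (hr : r ∈ Ioc a b) : 0 ≤ u1 r := by
  have := h.flux_mono ha le_rfl hr.1.le hr.2
  rw [h0] at this
  exact nonneg_of_mul_nonneg_right this (pow_pos (ha.trans_lt hr.1) m)

lemma deriv_nonpos (h : IsPosSol m a b u u1) (ha : 0 ≤ a) (h0 : u1 b = 0)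
    {r : ℝ} (hr : r ∈ Ioo a b) : u1 r ≤ 0 := by
  have := h.flux_mono ha hr.1.le hr.2.le le_rfl
  rw [h0, mul_zero] at this
  have hp := pow_pos (ha.trans_lt hr.1) m
  by_contra hc
  push Not at hc
  linarith [mul_pos hp hc]

lemma deriv_le (h : IsPosSol m a b u u1) (ha : 0 ≤ a) (h0 : a ^ m * u1 a = 0)
    {s : ℝ} (hs : s ∈ Ioc a b) : u1 s ≤ (s - a) * u s := by
  have key := le_of_hasDerivAt_nonneg
    (f := fun r => r ^ m * ((r - a) * u r) - r ^ m * u1 r)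
    (f' := fun r => (m * r ^ (m - 1)) * ((r - a) * u r) + r ^ m * (1 * u r + (r - a) * u1 r)
      - r ^ m * u r) (a := a) (b := b)
    (((continuous_pow m).continuousOn.mul
      ((continuous_id.sub continuous_const).continuousOn.mul h.cont)).sub h.flux_cont)
    (fun r hr => ((hasDerivAt_pow m r).mul
      (((hasDerivAt_id r).sub_const a).mul (h.hd r hr))).sub (h.hasDerivAt_flux ha hr))
    (fun r hr => by
      have hr0 : 0 < r := ha.trans_lt hr.1
      have h1 := h.deriv_nonneg ha h0 ⟨hr.1, hr.2.le⟩
      have h2 := h.nonneg r hr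
      have h3 : 0 ≤ r - a := by linarith [hr.1]
      have h4 : 0 ≤ (m * r ^ (m - 1)) * ((r - a) * u r) := by positivity
      have h5 : 0 ≤ r ^ m * ((r - a) * u1 r) := by positivity
      linarith) le_rfl hs.1.le hs.2
  simp only [sub_self, zero_mul, mul_zero, h0] at key
  have hp := pow_pos (ha.trans_lt hs.1) m
  rw [← mul_sub] at key
  linarith [nonneg_of_mul_nonneg_right key hp]

lemma le_deriv (h : IsPosSol m a b u u1) (ha : 0 ≤ a) (hb : b ≤ 1) (h0 : a ^ m * u1 a = 0)
    {s : ℝ} (hs : s ∈ Ioc a b) :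
    (s - a) ^ (m + 1) / (m + 2) * u s ≤ s ^ m * u1 s := by
  have key := le_of_hasDerivAt_nonneg
    (f := fun r => r ^ m * u1 r - (r - a) ^ (m + 1) / (m + 2) * u r)
    (f' := fun r => r ^ m * u r - ((((m + 1 : ℕ) : ℝ) * (r - a) ^ m * 1) / (m + 2) * u r
      + (r - a) ^ (m + 1) / (m + 2) * u1 r)) (a := a) (b := b)
    (h.flux_cont.sub ((by fun_prop : Continuous fun r : ℝ =>
      (r - a) ^ (m + 1) / ((m : ℝ) + 2)).continuousOn.mul h.cont))
    (fun r hr => (h.hasDerivAt_flux ha hr).sub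
      (((((hasDerivAt_id r).sub_const a).pow (m + 1)).div_const _).mul (h.hd r hr)))
    (fun r hr => by
      have hr0 : 0 < r := ha.trans_lt hr.1
      have h2 := h.nonneg r hr
      have h3 : 0 ≤ r - a := by linarith [hr.1]
      have h4 : r - a ≤ 1 := by linarith [hr.2]
      have h1 : u1 r ≤ u r :=
        (h.deriv_le ha h0 ⟨hr.1, hr.2.le⟩).trans (mul_le_of_le_one_left h2 h4)
      have h5 : (r - a) ^ m ≤ r ^ m := pow_le_pow_left₀ h3 (by linarith) m
      have h6 : (r - a) ^ (m + 1) ≤ (r - a) ^ m := pow_le_pow_of_le_one h3 h4 (Nat.le_succ m)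
      have h7 : (r - a) ^ (m + 1) / (m + 2) * u1 r ≤ (r - a) ^ m / (m + 2) * u r := by
        calc (r - a) ^ (m + 1) / (m + 2) * u1 r ≤ (r - a) ^ (m + 1) / (m + 2) * u r := by gcongr
          _ ≤ _ := by gcongr
      have h8 : ((((m + 1 : ℕ) : ℝ) * (r - a) ^ m * 1) / (m + 2) * u r
          + (r - a) ^ m / (m + 2) * u r) = (r - a) ^ m * u r := by
        push_cast
        field_simp
        ring
      have h9 := mul_le_mul_of_nonneg_right h5 h2
      linarith) le_rfl hs.1.le hs.2
  simp only [sub_self, ne_eq, Nat.add_eq_zero_iff, one_ne_zero, and_false, not_false_eq_true,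
    zero_pow, zero_div, zero_mul, h0] at key
  linarith

lemma le_neg_deriv (h : IsPosSol m a b u u1) (ha : 0 ≤ a) (hb : b ≤ 1) (hm : 1 ≤ m)
    (h0 : u1 b = 0) {s : ℝ} (hs : s ∈ Ioo a b) : (b - s) * u s ≤ -u1 s := by
  have key := le_of_hasDerivAt_nonneg
    (f := fun r => u1 r + (b - r) * u r)
    (f' := fun r => (u r - m / r * u1 r) + ((-1) * u r + (b - r) * u1 r)) (a := a) (b := b)
    (h.cont1.add ((continuous_const.sub continuous_id).continuousOn.mul h.cont))
    (fun r hr => (h.hd1 r hr).add (((hasDerivAt_id r).const_sub b).mul (h.hd r hr)))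
    (fun r hr => by
      have hr0 : 0 < r := ha.trans_lt hr.1
      have h1 := h.deriv_nonpos ha h0 hr
      have h2 : b - r ≤ m / r := by
        have hm' : (1 : ℝ) ≤ m := by exact_mod_cast hm
        have : (1 : ℝ) ≤ m / r := by
          rw [le_div_iff₀ hr0]
          linarith [hr.2]
        linarith
      nlinarith [mul_nonneg (sub_nonneg.2 h2) (neg_nonneg.2 h1)]) hs.1.le hs.2.le le_rfl
  simp only [h0, sub_self, zero_mul, add_zero] at key
  linarith

lemma neg_deriv_le (h : IsPosSol m a b u u1) (ha : 0 ≤ a) (hb : b ≤ 1)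
    (h0 : u1 b = 0) {s : ℝ} (hs : s ∈ Ioo a b) : -(s ^ m * u1 s) ≤ (b - s) * u s := by
  have key := le_of_hasDerivAt_nonneg
    (f := fun r => -(r ^ m * u1 r) - (b - r) * u r)
    (f' := fun r => -(r ^ m * u r) - ((-1) * u r + (b - r) * u1 r)) (a := a) (b := b)
    (h.flux_cont.neg.sub ((continuous_const.sub continuous_id).continuousOn.mul h.cont))
    (fun r hr => (h.hasDerivAt_flux ha hr).neg.sub
      (((hasDerivAt_id r).const_sub b).mul (h.hd r hr)))
    (fun r hr => by
      have hr0 : 0 < r := ha.trans_lt hr.1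
      have h1 := h.deriv_nonpos ha h0 hr
      have h2 : r ^ m ≤ 1 := pow_le_one₀ hr0.le (by linarith [hr.2])
      have h3 := mul_le_of_le_one_left (h.nonneg r hr) h2
      nlinarith [mul_nonneg (sub_nonneg.2 hr.2.le) (neg_nonneg.2 h1)]) hs.1.le hs.2.le le_rfl
  simp only [h0, sub_self, zero_mul, mul_zero, neg_zero] at key
  linarith

/-- The two inequalities satisfied by a point at which the reflection law holds. The solution `v` may
live on a smaller interval `[a',b]`, because it is singular at `0`. -/
lemma reflection_bounds {a' : ℝ} {v v1 : ℝ → ℝ} (hu : IsPosSol m a b u u1)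
    (hv : IsPosSol m a' b v v1) (ha : 0 ≤ a) (ha' : 0 ≤ a') (hb : b ≤ 1) (hm : 1 ≤ m) (hu0 : a ^ m * u1 a = 0) (hv0 : v1 b = 0)
    {s : ℝ} (hs : s ∈ Ioo a b) (hsa : a' < s) (hus : 0 < u s) (hvs : 0 < v s)
    (hr : u1 s / u s + v1 s / v s = 0) :
    b - s ≤ s - a ∧ (s - a) ^ (m + 1) / (m + 2) ≤ b - s := by
  have hs' : s ∈ Ioc a b := ⟨hs.1, hs.2.le⟩
  have hsm : 0 < s ^ m := pow_pos (ha.trans_lt hs.1) m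
  have e1 : u1 s / u s ≤ s - a := (div_le_iff₀ hus).2 (hu.deriv_le ha hu0 hs')
  have e2 : b - s ≤ -v1 s / v s := (le_div_iff₀ hvs).2 (hv.le_neg_deriv ha' hb hm hv0 ⟨hsa, hs.2⟩)
  have e3 : (s - a) ^ (m + 1) / (m + 2) ≤ s ^ m * u1 s / u s :=
    (le_div_iff₀ hus).2 (hu.le_deriv ha hb hu0 hs')
  have e4 : -(s ^ m * v1 s) / v s ≤ b - s := (div_le_iff₀ hvs).2 (hv.neg_deriv_le ha' hb hv0 ⟨hsa, hs.2⟩)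
  have e5 : u1 s / u s = -v1 s / v s := by
    rw [neg_div]
    linarith
  have e6 : s ^ m * u1 s / u s = -(s ^ m * v1 s) / v s := by
    rw [mul_div_assoc, e5]
    ring
  constructor <;> linarith

end IsPosSol

/-! ### The solutions attached to the data -/

namespace GreenData

variable {m : ℕ} (d : GreenData (m + 1))

/-- The derivative of `ξ`, one-sided at the endpoints of `[0,1]`. -/
noncomputable def xi1 : ℝ → ℝ := derivWithin d.xi (Icc 0 1)

/-- The derivative of `ζ`, one-sided at `1`. -/
noncomputable def zeta1 : ℝ → ℝ := derivWithin d.zeta (Ioc 0 1)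

/-- The solution `ξ'(c) ζ - ξ ζ'(c)`, whose derivative vanishes at `c`. -/
noncomputable def sol (c r : ℝ) : ℝ := d.xi1 c * d.zeta r - d.xi r * d.zeta1 c

/-- The derivative of `sol c`. -/
noncomputable def sol1 (c r : ℝ) : ℝ := d.xi1 c * d.zeta1 r - d.xi1 r * d.zeta1 c

lemma xi1_cont : ContinuousOn d.xi1 (Icc 0 1) :=
  d.xi_smooth.continuousOn_derivWithin (uniqueDiffOn_Icc zero_lt_one) (by norm_num)

lemma zeta1_cont : ContinuousOn d.zeta1 (Ioc 0 1) :=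
  d.zeta_smooth.continuousOn_derivWithin (uniqueDiffOn_Ioc 0 1) (by norm_num)

lemma xi1_eq {r : ℝ} (hr : r ∈ Ioo (0 : ℝ) 1) : d.xi1 r = deriv d.xi r :=
  derivWithin_of_mem_nhds (Icc_mem_nhds hr.1 hr.2)

lemma zeta1_eq {r : ℝ} (hr : r ∈ Ioo (0 : ℝ) 1) : d.zeta1 r = deriv d.zeta r :=
  derivWithin_of_mem_nhds (Ioc_mem_nhds hr.1 hr.2)

lemma xi_hd {r : ℝ} (hr : r ∈ Ioo (0 : ℝ) 1) : HasDerivAt d.xi (d.xi1 r) r := by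
  rw [d.xi1_eq hr]
  exact ((d.xi_smooth.contDiffAt (Icc_mem_nhds hr.1 hr.2)).differentiableAt
    (by norm_num)).hasDerivAt

lemma zeta_hd {r : ℝ} (hr : r ∈ Ioo (0 : ℝ) 1) : HasDerivAt d.zeta (d.zeta1 r) r := by
  rw [d.zeta1_eq hr]
  exact ((d.zeta_smooth.contDiffAt (Ioc_mem_nhds hr.1 hr.2)).differentiableAt
    (by norm_num)).hasDerivAt

lemma differentiableAt_deriv_of_contDiffAt {f : ℝ → ℝ} {r : ℝ} (h : ContDiffAt ℝ 2 f r) :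
    DifferentiableAt ℝ (deriv f) r := by
  have h1 : ContDiffAt ℝ 1 (deriv f) r := h.derivWithin (by norm_num)
  exact h1.differentiableAt (by norm_num)

lemma xi1_hd {r : ℝ} (hr : r ∈ Ioo (0 : ℝ) 1) :
    HasDerivAt d.xi1 (d.xi r - m / r * d.xi1 r) r := by
  have h1 := (differentiableAt_deriv_of_contDiffAt
    (d.xi_smooth.contDiffAt (Icc_mem_nhds hr.1 hr.2))).hasDerivAt
  have h2 : d.xi1 =ᶠ[𝓝 r] deriv d.xi := by
    filter_upwards [Ioo_mem_nhds hr.1 hr.2] with x hx using d.xi1_eq hx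
  refine (h1.congr_of_eventuallyEq h2).congr_deriv ?_
  have := d.xi_ode r hr
  push_cast at this
  rw [add_sub_cancel_right] at this
  rw [d.xi1_eq hr]
  linarith

lemma zeta1_hd {r : ℝ} (hr : r ∈ Ioo (0 : ℝ) 1) :
    HasDerivAt d.zeta1 (d.zeta r - m / r * d.zeta1 r) r := by
  have h1 := (differentiableAt_deriv_of_contDiffAt
    (d.zeta_smooth.contDiffAt (Ioc_mem_nhds hr.1 hr.2))).hasDerivAt
  have h2 : d.zeta1 =ᶠ[𝓝 r] deriv d.zeta := by
    filter_upwards [Ioo_mem_nhds hr.1 hr.2] with x hx using d.zeta1_eq hx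
  refine (h1.congr_of_eventuallyEq h2).congr_deriv ?_
  have := d.zeta_ode r hr
  push_cast at this
  rw [add_sub_cancel_right] at this
  rw [d.zeta1_eq hr]
  linarith

lemma wronskian1 {r : ℝ} (hr : r ∈ Ioc (0 : ℝ) 1) : r ^ m * d.sol r r = 1 := by
  have hsub : Ioc (0 : ℝ) 1 ⊆ Icc 0 1 := Ioc_subset_Icc_self
  have hc : ContinuousOn (fun r => r ^ m * (d.xi1 r * d.zeta r - d.xi r * d.zeta1 r))
      (Ioc 0 1) :=
    (continuous_pow m).continuousOn.mul
      (((d.xi1_cont.mono hsub).mul d.zeta_smooth.continuousOn).sub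
        ((d.xi_smooth.continuousOn.mono hsub).mul d.zeta1_cont))
  have he : EqOn (fun r => r ^ m * (d.xi1 r * d.zeta r - d.xi r * d.zeta1 r)) (fun _ => 1)
      (Ioo 0 1) := by
    intro x hx
    have := d.wronskian x ⟨hx.1, hx.2.le⟩
    simp only [Nat.add_sub_cancel] at this
    simp only [d.xi1_eq hx, d.zeta1_eq hx, this]
  refine he.of_subset_closure hc continuousOn_const Ioo_subset_Ioc_self ?_ hr
  rw [closure_Ioo (zero_ne_one)]
  exact hsub

lemma xi1_nonneg (r : ℝ) : 0 ≤ d.xi1 r := d.xi_mono.monotoneOn.derivWithin_nonneg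

lemma zeta1_nonpos (r : ℝ) : d.zeta1 r ≤ 0 := d.zeta_anti.antitoneOn.derivWithin_nonpos

lemma wronskian_one : deriv d.xi 1 * d.zeta 1 = 1 := by
  simpa [d.zeta_deriv_one] using d.wronskian 1 ⟨zero_lt_one, le_rfl⟩

lemma xi1_one : d.xi1 1 = deriv d.xi 1 := by
  have h : deriv d.xi 1 ≠ 0 := left_ne_zero_of_mul_eq_one d.wronskian_one
  exact (differentiableAt_of_deriv_ne_zero h).derivWithin
    (uniqueDiffOn_Icc zero_lt_one 1 ⟨zero_le_one, le_rfl⟩)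

/-- The value `deriv ζ 1 = 0` alone does not control the one-sided derivative; the Wronskian
identity, continued to `r = 1`, does. -/
lemma zeta1_one : d.zeta1 1 = 0 := by
  have h := d.wronskian1 (r := 1) ⟨zero_lt_one, le_rfl⟩
  rw [sol, d.xi1_one, d.wronskian_one, one_pow, one_mul] at h
  have h2 : d.xi 1 * d.zeta1 1 = 0 := by linarith
  exact (mul_eq_zero.1 h2).resolve_left (d.xi_pos 1 ⟨zero_le_one, le_rfl⟩).ne'

lemma sol_pos {c r : ℝ} (hc : c ∈ Ioc (0 : ℝ) 1) (hr : r ∈ Ioc (0 : ℝ) 1) : 0 < d.sol c r := by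
  have hx := d.xi1_nonneg c
  have hz := d.zeta1_nonpos c
  have px := d.xi_pos r ⟨hr.1.le, hr.2⟩
  have pz := d.zeta_pos r hr
  rcases hx.lt_or_eq with h | h
  · have h1 := mul_pos h pz
    have h2 := mul_nonneg px.le (neg_nonneg.2 hz)
    rw [sol]
    linarith
  · rcases hz.lt_or_eq with h' | h'
    · have h1 := mul_nonneg hx pz.le
      have h2 := mul_pos px (neg_pos.2 h')
      rw [sol]
      linarith
    · -- both derivatives vanish at `c`, contradicting the Wronskian identity
      have := d.wronskian1 hc
      simp [sol, ← h, h'] at this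

lemma sol1_self (c : ℝ) : d.sol1 c c = 0 := sub_self _

lemma isPosSol_xi {a b : ℝ} (ha : 0 ≤ a) (hb : b ≤ 1) : IsPosSol m a b d.xi d.xi1 where
  cont := d.xi_smooth.continuousOn.mono (Icc_subset_Icc ha hb)
  cont1 := d.xi1_cont.mono (Icc_subset_Icc ha hb)
  hd _ hr := d.xi_hd ⟨ha.trans_lt hr.1, hr.2.trans_le hb⟩
  hd1 _ hr := d.xi1_hd ⟨ha.trans_lt hr.1, hr.2.trans_le hb⟩
  nonneg r hr := (d.xi_pos r ⟨ha.trans hr.1.le, hr.2.le.trans hb⟩).le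

lemma isPosSol_sol {a b c : ℝ} (ha : 0 < a) (hb : b ≤ 1) (hc : c ∈ Ioc (0 : ℝ) 1) :
    IsPosSol m a b (d.sol c) (d.sol1 c) where
  cont := by
    have h1 : Icc a b ⊆ Ioc 0 1 := fun r hr => ⟨ha.trans_le hr.1, hr.2.trans hb⟩
    exact (continuousOn_const.mul (d.zeta_smooth.continuousOn.mono h1)).sub
      ((d.isPosSol_xi ha.le hb).cont.mul continuousOn_const)
  cont1 := by
    have h1 : Icc a b ⊆ Ioc 0 1 := fun r hr => ⟨ha.trans_le hr.1, hr.2.trans hb⟩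
    exact (continuousOn_const.mul (d.zeta1_cont.mono h1)).sub
      ((d.isPosSol_xi ha.le hb).cont1.mul continuousOn_const)
  hd r hr := by
    have hr' : r ∈ Ioo (0 : ℝ) 1 := ⟨ha.trans hr.1, hr.2.trans_le hb⟩
    exact ((d.zeta_hd hr').const_mul _).sub ((d.xi_hd hr').mul_const _)
  hd1 r hr := by
    have hr' : r ∈ Ioo (0 : ℝ) 1 := ⟨ha.trans hr.1, hr.2.trans_le hb⟩
    refine (((d.zeta1_hd hr').const_mul _).sub ((d.xi1_hd hr').mul_const _)).congr_deriv ?_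
    simp only [sol, sol1]
    ring
  nonneg r hr := (d.sol_pos hc ⟨ha.trans hr.1, hr.2.le.trans hb⟩).le

lemma xi1_pos {r : ℝ} (hr : r ∈ Ioc (0 : ℝ) 1) (hm : 1 ≤ m) : 0 < d.xi1 r := by
  have h := (d.isPosSol_xi le_rfl hr.2).le_deriv (s := r) le_rfl hr.2
    (by rw [zero_pow (by omega), zero_mul]) ⟨hr.1, le_rfl⟩
  have hp := d.xi_pos r ⟨hr.1.le, hr.2⟩
  have h0 := hr.1
  have h1 : 0 < (r - 0) ^ (m + 1) / (m + 2) * d.xi r := by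
    rw [sub_zero]
    positivity
  exact pos_of_mul_pos_right (h1.trans_le h) (by positivity)

lemma sol1_pos {a b : ℝ} (ha : 0 < a) (hab : a < b) (hb : b ≤ 1) : 0 < d.sol1 a b := by
  have hb0 := ha.trans hab
  have h := (d.isPosSol_sol (c := a) ha hb ⟨ha, hab.le.trans hb⟩).le_deriv (s := b) ha.le hb
    (by rw [d.sol1_self, mul_zero]) ⟨hab, le_rfl⟩
  have hp := d.sol_pos (c := a) (r := b) ⟨ha, hab.le.trans hb⟩ ⟨hb0, hb⟩
  have h0 := sub_pos.2 hab
  have h1 : 0 < (b - a) ^ (m + 1) / (m + 2) * d.sol a b := by positivity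
  exact pos_of_mul_pos_right (h1.trans_le h) (by positivity)

lemma zeta1_neg {a : ℝ} (ha : 0 < a) (ha1 : a < 1) (hm : 1 ≤ m) : d.zeta1 a < 0 := by
  have h := d.sol1_pos ha ha1 le_rfl
  rw [sol1, d.zeta1_one, mul_zero, zero_sub] at h
  have hx := d.xi1_pos (r := 1) ⟨zero_lt_one, le_rfl⟩ hm
  by_contra hc
  push Not at hc
  linarith [mul_nonneg hx.le hc]

/-- `ζ_{[a,b]}` is a nonzero multiple of `sol b`. -/
lemma zetaI_eq {a b : ℝ} (ha : 0 ≤ a) (hab : a < b) (hb : b ≤ 1) (hm : 1 ≤ m) :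
    ∃ c : ℝ, c ≠ 0 ∧ d.zetaI a b = fun r => c * d.sol b r := by
  have hx1 := d.xi1_pos (r := 1) ⟨zero_lt_one, le_rfl⟩ hm
  have hb0 : 0 < b := ha.trans_lt hab
  unfold zetaI
  split_ifs with h0 h1 h1
  · refine ⟨(d.xi1 1)⁻¹, inv_ne_zero hx1.ne', funext fun r => ?_⟩
    rw [h1, sol, d.zeta1_one]
    field_simp
    ring
  · have hb' : b ∈ Ioo (0 : ℝ) 1 := ⟨hb0, lt_of_le_of_ne hb h1⟩
    refine ⟨1, one_ne_zero, funext fun r => ?_⟩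
    rw [sol, d.xi1_eq hb', d.zeta1_eq hb', one_mul]
  · have ha0 : 0 < a := lt_of_le_of_ne ha (Ne.symm h0)
    have hz := d.zeta1_neg ha0 (hab.trans_le hb) hm
    rw [← d.zeta1_eq ⟨ha0, hab.trans_le hb⟩]
    refine ⟨-(d.xi1 1 * d.zeta1 a)⁻¹, neg_ne_zero.2 (inv_ne_zero (mul_ne_zero hx1.ne' hz.ne)),
      funext fun r => ?_⟩
    have hz' := hz.ne
    rw [h1, sol, d.zeta1_one]
    field_simp
    ring
  · have ha0 : 0 < a := lt_of_le_of_ne ha (Ne.symm h0)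
    have hb' : b ∈ Ioo (0 : ℝ) 1 := ⟨hb0, lt_of_le_of_ne hb h1⟩
    have ha' : a ∈ Ioo (0 : ℝ) 1 := ⟨ha0, hab.trans hb'.2⟩
    have hs := d.sol1_pos ha0 hab hb
    rw [← d.xi1_eq hb', ← d.zeta1_eq hb', ← d.xi1_eq ha', ← d.zeta1_eq ha']
    refine ⟨(√(d.sol1 a b))⁻¹, inv_ne_zero (Real.sqrt_pos.2 hs).ne', funext fun r => ?_⟩
    rw [div_eq_inv_mul]
    rfl

/-- `ξ_{[a,b]}` is a nonzero multiple of `ξ` if `a = 0`, and of `sol a` otherwise. -/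
lemma xiI_eq {a b : ℝ} (ha : 0 ≤ a) (hab : a < b) (hb : b ≤ 1) (hm : 1 ≤ m) :
    ∃ c : ℝ, c ≠ 0 ∧ d.xiI a b = fun r => c * (if a = 0 then d.xi r else d.sol a r) := by
  have hb0 : 0 < b := ha.trans_lt hab
  unfold xiI
  split_ifs with h0 h1 h1
  · exact ⟨1, one_ne_zero, funext fun r => (one_mul _).symm⟩
  · have hb' : b ∈ Ioo (0 : ℝ) 1 := ⟨hb0, lt_of_le_of_ne hb h1⟩
    rw [← d.xi1_eq hb']
    exact ⟨(d.xi1 b)⁻¹, inv_ne_zero (d.xi1_pos ⟨hb0, hb⟩ hm).ne',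
      funext fun r => div_eq_inv_mul _ _⟩
  · have ha' : a ∈ Ioo (0 : ℝ) 1 := ⟨lt_of_le_of_ne ha (Ne.symm h0), hab.trans_le hb⟩
    rw [← d.xi1_eq ha', ← d.zeta1_eq ha']
    exact ⟨1, one_ne_zero, funext fun r => (one_mul _).symm⟩
  · have ha0 : 0 < a := lt_of_le_of_ne ha (Ne.symm h0)
    have hb' : b ∈ Ioo (0 : ℝ) 1 := ⟨hb0, lt_of_le_of_ne hb h1⟩
    have ha' : a ∈ Ioo (0 : ℝ) 1 := ⟨ha0, hab.trans hb'.2⟩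
    have hs := d.sol1_pos ha0 hab hb
    rw [← d.xi1_eq hb', ← d.zeta1_eq hb', ← d.xi1_eq ha', ← d.zeta1_eq ha']
    refine ⟨(√(d.sol1 a b))⁻¹, inv_ne_zero (Real.sqrt_pos.2 hs).ne', funext fun r => ?_⟩
    rw [div_eq_inv_mul]
    rfl

/-- Logarithmic derivatives ignore constant factors. -/
lemma logDeriv_const_mul_eq {f : ℝ → ℝ} {f' c s : ℝ} (hc : c ≠ 0) (hf : HasDerivAt f f' s) :
    deriv (fun r => c * f r) s / (c * f s) = f' / f s := by
  rw [(hf.const_mul c).deriv, mul_div_mul_left _ _ hc]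

lemma reflectionAt_bounds {a b s : ℝ} (ha : 0 ≤ a) (hab : a < b) (hb : b ≤ 1) (hm : 1 ≤ m)
    (hs : s ∈ Ioo a b) (hr : d.ReflectionAt a b s) :
    b - s ≤ s - a ∧ (s - a) ^ (m + 1) / (m + 2) ≤ b - s := by
  have hs0 : 0 < s := ha.trans_lt hs.1
  have hb0 : 0 < b := ha.trans_lt hab
  have hs1 : s < 1 := hs.2.trans_le hb
  obtain ⟨c, hc, hxi⟩ := d.xiI_eq ha hab hb hm
  obtain ⟨c', hc', hzeta⟩ := d.zetaI_eq ha hab hb hm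
  have hv := d.isPosSol_sol (a := s / 2) (b := b) (c := b) (by positivity) hb ⟨hb0, hb⟩
  have hvs := d.sol_pos (c := b) (r := s) ⟨hb0, hb⟩ ⟨hs0, hs1.le⟩
  have hvd := hv.hd s ⟨by linarith, hs.2⟩
  rw [ReflectionAt, hxi, hzeta] at hr
  simp only at hr
  rw [logDeriv_const_mul_eq hc' hvd] at hr
  by_cases h0 : a = 0
  · simp only [if_pos h0] at hr
    rw [logDeriv_const_mul_eq hc (d.xi_hd ⟨hs0, hs1⟩)] at hr
    exact (d.isPosSol_xi ha hb).reflection_bounds hv ha (by positivity) hb hm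
      (by rw [h0, zero_pow (by omega), zero_mul]) (d.sol1_self b) hs (by linarith)
      (d.xi_pos s ⟨hs0.le, hs1.le⟩) hvs hr
  · have ha0 : 0 < a := lt_of_le_of_ne ha (Ne.symm h0)
    have ha1 : a ∈ Ioc (0 : ℝ) 1 := ⟨ha0, hab.le.trans hb⟩
    have hu := d.isPosSol_sol (a := a) (b := b) (c := a) ha0 hb ha1
    simp only [if_neg h0] at hr
    rw [logDeriv_const_mul_eq hc (hu.hd s hs)] at hr
    exact hu.reflection_bounds hv ha (by positivity) hb hm
      (by rw [d.sol1_self, mul_zero]) (d.sol1_self b) hs (by linarith)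
      (d.sol_pos ha1 ⟨hs0, hs1.le⟩) hvs hr

end GreenData

theorem statement7 {N : ℕ} (hN : 3 ≤ N) (d : GreenData N)
    (sbar : ℝ → ℝ → ℝ) (hsbar : IsSBar d sbar) :
    ∀ ε > (0:ℝ), ∃ δ > (0:ℝ), ∀ a b : ℝ, 0 ≤ a → a < b → b ≤ 1 → b - a > ε →
      b - sbar a b > δ ∧ sbar a b - a > δ := by
  obtain ⟨m, rfl⟩ : ∃ m, N = m + 1 := ⟨N - 1, by omega⟩
  have hm : 1 ≤ m := by omega
  intro ε hε
  refine ⟨min (ε / 2) ((ε / 2) ^ (m + 1) / (m + 2)), lt_min (by positivity) (by positivity), ?_⟩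
  intro a b ha hab hb hε'
  obtain ⟨hs, hr, -⟩ := hsbar a b ha hab hb
  obtain ⟨h1, h2⟩ := d.reflectionAt_bounds ha hab hb hm hs hr
  have h3 : ε / 2 < sbar a b - a := by linarith
  have h4 : (ε / 2) ^ (m + 1) < (sbar a b - a) ^ (m + 1) :=
    pow_lt_pow_left₀ h3 (by positivity) (by omega)
  have h5 : (ε / 2) ^ (m + 1) / (m + 2) < (sbar a b - a) ^ (m + 1) / (m + 2) := by gcongr
  exact ⟨(min_le_right _ _).trans_lt (h5.trans_le h2), (min_le_left _ _).trans_lt h3⟩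
end

section
/- There exists a constant C > 0 such that for every r ∈ [0,1] and every s, t ∈ (0,1], |G(r,s) − G(r,t)| ≤ C·|s − t|. -/
/-!
For `s ≥ r` the kernel `s ↦ G(r,s)` is `ξ(r) · s^{N-1} ζ(s)`, and for `s ≤ r` it is
`ζ(r) · s^{N-1} ξ(s)`; the two expressions agree at `s = r`, so it is enough to bound the
`s`-derivative of each by a constant independent of `r` and apply the mean value theorem on
each side of `r`.

All bounds come from three facts: `0 < ξ(0) ≤ ξ ≤ M`, `|ξ'| ≤ K` on `(0,1)`, and
`s^{N-2} ζ(s) ≤ Z` on `(0,1]` (`GreenData.zeta_weight_bound`: by the asymptotics near `0` and by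
monotonicity of `ζ` away from `0`). The Wronskian identity then bounds `s^{N-1} ζ'(s)`, which
settles the first branch. In the second, `ζ(r) ≤ ζ(s)` gives `s^{N-2} ζ(r) ≤ Z`, which
compensates the singularity of `ζ(r)` as `r → 0`.
-/

open Real Set Filter Topology

/-- Mean value inequality with the derivative bound required at interior points only. -/
theorem abs_sub_le_of_hasDerivAt_interior {f f' : ℝ → ℝ} {s t C : ℝ} (hst : s ≤ t)
    (hc : ContinuousOn f (Set.Icc s t)) (hd : ∀ x ∈ Set.Ioo s t, HasDerivAt f (f' x) x)
    (hb : ∀ x ∈ Set.Ioo s t, |f' x| ≤ C) : |f t - f s| ≤ C * (t - s) := by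
  rcases hst.eq_or_lt with rfl | hlt
  · simp
  · obtain ⟨c, hcm, he⟩ := exists_hasDerivAt_eq_slope f f' hlt hc hd
    have hpos : 0 < t - s := sub_pos.2 hlt
    have h1 : f t - f s = f' c * (t - s) := by rw [he]; field_simp
    rw [h1, abs_mul, abs_of_pos hpos]
    exact mul_le_mul_of_nonneg_right (hb c hcm) hpos.le

namespace GreenData

theorem xi_hasDerivAt_s17 {N : ℕ} (d : GreenData N) {x : ℝ} (hx : x ∈ Set.Ioo (0:ℝ) 1) :
    HasDerivAt d.xi (deriv d.xi x) x :=
  (((d.xi_smooth.differentiableOn (by norm_num)) x ⟨hx.1.le, hx.2.le⟩).differentiableAt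
    (Icc_mem_nhds hx.1 hx.2)).hasDerivAt

theorem zeta_hasDerivAt_s17 {N : ℕ} (d : GreenData N) {x : ℝ} (hx : x ∈ Set.Ioo (0:ℝ) 1) :
    HasDerivAt d.zeta (deriv d.zeta x) x :=
  (((d.zeta_smooth.differentiableOn (by norm_num)) x ⟨hx.1, hx.2.le⟩).differentiableAt
    (Ioc_mem_nhds hx.1 hx.2)).hasDerivAt

theorem xi_deriv_bound {N : ℕ} (d : GreenData N) :
    ∃ K : ℝ, 0 ≤ K ∧ ∀ x ∈ Set.Ioo (0:ℝ) 1, |deriv d.xi x| ≤ K := by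
  have hc : ContinuousOn (derivWithin d.xi (Set.Icc 0 1)) (Set.Icc 0 1) :=
    d.xi_smooth.continuousOn_derivWithin (uniqueDiffOn_Icc one_pos) (by norm_num)
  obtain ⟨K, hK⟩ := isCompact_Icc.exists_bound_of_continuousOn hc
  refine ⟨max K 0, le_max_right _ _, fun x hx => ?_⟩
  have h := hK x ⟨hx.1.le, hx.2.le⟩
  rw [derivWithin_of_mem_nhds (Icc_mem_nhds hx.1 hx.2), Real.norm_eq_abs] at h
  exact h.trans (le_max_left _ _)

theorem zeta_weight_bound {n : ℕ} (d : GreenData (n + 3)) :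
    ∃ Z : ℝ, 0 ≤ Z ∧ ∀ x ∈ Set.Ioc (0:ℝ) 1, x ^ (n + 1) * d.zeta x ≤ Z := by
  have h : ∀ᶠ x in 𝓝[>] (0:ℝ), x ^ (n + 1) * d.zeta x < 2 :=
    d.zeta_lim.eventually_lt_const (by norm_num)
  obtain ⟨e, he, hE⟩ := mem_nhdsGT_iff_exists_Ioo_subset.1 h
  have he0 : (0:ℝ) < e := he
  set δ := min e 1 / 2 with hδ
  have hm : 0 < min e 1 := lt_min he0 one_pos
  have hδ0 : 0 < δ := by positivity
  have hδe : δ < e := by linarith [min_le_left e 1]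
  have hδ1 : δ ≤ 1 := by linarith [min_le_right e 1]
  have hz := d.zeta_pos δ ⟨hδ0, hδ1⟩
  refine ⟨2 + d.zeta δ, by linarith, fun x hx => ?_⟩
  rcases lt_or_ge x δ with hlt | hge
  · have h2 : x ^ (n + 1) * d.zeta x < 2 := hE ⟨hx.1, hlt.trans hδe⟩
    linarith
  · have h1 : d.zeta x ≤ d.zeta δ := d.zeta_anti.antitoneOn ⟨hδ0, hδ1⟩ hx hge
    have h2 : x ^ (n + 1) ≤ 1 := pow_le_one₀ hx.1.le hx.2
    have h3 := d.zeta_pos x hx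
    nlinarith

/-- The branch `s ≥ r`: `s ↦ s^{N-1} ζ(s)` is Lipschitz on `(0,1]`. -/
theorem zeta_branch_lipschitz {n : ℕ} (d : GreenData (n + 3)) :
    ∃ A : ℝ, 0 ≤ A ∧ ∀ s t : ℝ, 0 < s → s ≤ t → t ≤ 1 →
      |t ^ (n + 2) * d.zeta t - s ^ (n + 2) * d.zeta s| ≤ A * (t - s) := by
  obtain ⟨K, hK0, hK⟩ := d.xi_deriv_bound
  obtain ⟨Z, hZ0, hZ⟩ := d.zeta_weight_bound
  have hx0 := d.xi_pos 0 ⟨le_rfl, zero_le_one⟩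
  refine ⟨(n + 2) * Z + (K * Z + 1) / d.xi 0, by positivity, fun s t hs hst ht => ?_⟩
  have hsub : Set.Icc s t ⊆ Set.Ioc 0 1 := fun x hx => ⟨hs.trans_le hx.1, hx.2.trans ht⟩
  refine abs_sub_le_of_hasDerivAt_interior (f := fun x => x ^ (n + 2) * d.zeta x)
    (f' := fun x => ((n:ℝ) + 2) * x ^ (n + 1) * d.zeta x + x ^ (n + 2) * deriv d.zeta x)
    hst ((continuous_pow _).continuousOn.mul (d.zeta_smooth.continuousOn.mono hsub)) ?_ ?_
  · intro x hx
    have hx' : x ∈ Set.Ioo (0:ℝ) 1 := ⟨hs.trans hx.1, hx.2.trans_le ht⟩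
    simpa using (hasDerivAt_pow (n + 2) x).fun_mul (d.zeta_hasDerivAt_s17 hx')
  · intro x hx
    have hx' : x ∈ Set.Ioo (0:ℝ) 1 := ⟨hs.trans hx.1, hx.2.trans_le ht⟩
    have hxc : x ∈ Set.Ioc (0:ℝ) 1 := ⟨hx'.1, hx'.2.le⟩
    have hz := d.zeta_pos x hxc
    have hp : 0 ≤ x ^ (n + 1) * d.zeta x := mul_nonneg (pow_nonneg hx'.1.le _) hz.le
    have hw : x ^ (n + 2) * (deriv d.xi x * d.zeta x - d.xi x * deriv d.zeta x) = 1 :=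
      d.wronskian x hxc
    have hxi : d.xi 0 ≤ d.xi x :=
      d.xi_mono.monotoneOn ⟨le_rfl, zero_le_one⟩ ⟨hx'.1.le, hx'.2.le⟩ hx'.1.le
    have h1 : d.xi x * (x ^ (n + 2) * deriv d.zeta x)
        = x * deriv d.xi x * (x ^ (n + 1) * d.zeta x) - 1 := by
      have : x ^ (n + 2) = x * x ^ (n + 1) := by ring
      linear_combination (-1) * hw + deriv d.xi x * d.zeta x * this
    have h2 : |x * deriv d.xi x * (x ^ (n + 1) * d.zeta x)| ≤ K * Z := by
      rw [abs_mul, abs_mul, abs_of_pos hx'.1, abs_of_nonneg hp]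
      refine mul_le_mul ?_ (hZ x hxc) hp hK0
      have := mul_le_mul hx'.2.le (hK x hx') (abs_nonneg _) zero_le_one
      linarith
    have h3 : |x ^ (n + 2) * deriv d.zeta x| ≤ (K * Z + 1) / d.xi 0 := by
      rw [le_div_iff₀ hx0]
      calc |x ^ (n + 2) * deriv d.zeta x| * d.xi 0
          ≤ |x ^ (n + 2) * deriv d.zeta x| * d.xi x := by gcongr
        _ = |d.xi x * (x ^ (n + 2) * deriv d.zeta x)| := by
            rw [abs_mul (d.xi x), abs_of_pos (hx0.trans_le hxi), mul_comm]
        _ ≤ K * Z + 1 := by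
            rw [h1]
            refine (abs_sub _ _).trans ?_
            rw [abs_one]; linarith
    refine (abs_add_le _ _).trans (add_le_add ?_ h3)
    rw [mul_assoc, abs_of_nonneg (by positivity)]
    exact mul_le_mul_of_nonneg_left (hZ x hxc) (by positivity)

/-- The branch `s ≤ r`: `s ↦ s^{N-1} ξ(s) ζ(r)` is Lipschitz on `(0,r]`, uniformly in `r`. -/
theorem xi_branch_lipschitz {n : ℕ} (d : GreenData (n + 3)) :
    ∃ B : ℝ, 0 ≤ B ∧ ∀ s t r : ℝ, 0 < s → s ≤ t → t ≤ r → r ≤ 1 →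
      |t ^ (n + 2) * d.xi t * d.zeta r - s ^ (n + 2) * d.xi s * d.zeta r| ≤ B * (t - s) := by
  obtain ⟨K, hK0, hK⟩ := d.xi_deriv_bound
  obtain ⟨Z, hZ0, hZ⟩ := d.zeta_weight_bound
  have hM := d.xi_pos 1 ⟨zero_le_one, le_rfl⟩
  refine ⟨((n + 2) * d.xi 1 + K) * Z, by positivity, fun s t r hs hst htr hr => ?_⟩
  have hsub : Set.Icc s t ⊆ Set.Icc 0 1 :=
    fun x hx => ⟨hs.le.trans hx.1, hx.2.trans (htr.trans hr)⟩
  refine abs_sub_le_of_hasDerivAt_interior (f := fun x => x ^ (n + 2) * d.xi x * d.zeta r)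
    (f' := fun x => (((n:ℝ) + 2) * x ^ (n + 1) * d.xi x + x ^ (n + 2) * deriv d.xi x)
      * d.zeta r) hst
    (((continuous_pow _).continuousOn.mul (d.xi_smooth.continuousOn.mono hsub)).mul
      continuousOn_const) ?_ ?_
  · intro x hx
    have hx' : x ∈ Set.Ioo (0:ℝ) 1 := ⟨hs.trans hx.1, hx.2.trans_le (htr.trans hr)⟩
    simpa using ((hasDerivAt_pow (n + 2) x).mul (d.xi_hasDerivAt_s17 hx')).mul_const (d.zeta r)
  · intro x hx
    have hx' : x ∈ Set.Ioo (0:ℝ) 1 := ⟨hs.trans hx.1, hx.2.trans_le (htr.trans hr)⟩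
    have hxc : x ∈ Set.Ioc (0:ℝ) 1 := ⟨hx'.1, hx'.2.le⟩
    have hxr : x ≤ r := hx.2.le.trans htr
    have hrc : r ∈ Set.Ioc (0:ℝ) 1 := ⟨hx'.1.trans_le hxr, hr⟩
    have hz := d.zeta_pos r hrc
    have hxi := d.xi_pos x ⟨hx'.1.le, hx'.2.le⟩
    have hxi1 : d.xi x ≤ d.xi 1 :=
      d.xi_mono.monotoneOn ⟨hx'.1.le, hx'.2.le⟩ ⟨zero_le_one, le_rfl⟩ hx'.2.le
    have hx0 : 0 < x := hx'.1
    have hzr : x ^ (n + 1) * d.zeta r ≤ Z :=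
      (mul_le_mul_of_nonneg_left (d.zeta_anti.antitoneOn hxc hrc hxr) (by positivity)).trans
        (hZ x hxc)
    have h1 : (((n:ℝ) + 2) * x ^ (n + 1) * d.xi x + x ^ (n + 2) * deriv d.xi x) * d.zeta r
        = (((n:ℝ) + 2) * d.xi x + x * deriv d.xi x) * (x ^ (n + 1) * d.zeta r) := by ring
    have h2 : |((n:ℝ) + 2) * d.xi x + x * deriv d.xi x| ≤ (n + 2) * d.xi 1 + K := by
      refine (abs_add_le _ _).trans (add_le_add ?_ ?_)
      · rw [abs_of_nonneg (by positivity)]; gcongr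
      · rw [abs_mul, abs_of_pos hx0]
        have := mul_le_mul hx'.2.le (hK x hx') (abs_nonneg _) zero_le_one
        linarith
    show |_ * d.zeta r| ≤ _
    rw [h1, abs_mul, abs_of_nonneg (a := x ^ (n + 1) * d.zeta r) (by positivity)]
    exact mul_le_mul h2 hzr (by positivity) (by positivity)

end GreenData

theorem statement17 {N : ℕ} (hN : 3 ≤ N) (d : GreenData N) :
    ∃ C > (0:ℝ), ∀ r ∈ Set.Icc (0:ℝ) 1, ∀ s ∈ Set.Ioc (0:ℝ) 1, ∀ t ∈ Set.Ioc (0:ℝ) 1,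
      |d.G 0 1 r s - d.G 0 1 r t| ≤ C * |s - t| := by
  obtain ⟨n, rfl⟩ : ∃ n, N = n + 3 := ⟨N - 3, by omega⟩
  obtain ⟨A, hA0, hA⟩ := d.zeta_branch_lipschitz
  obtain ⟨B, hB0, hB⟩ := d.xi_branch_lipschitz
  have hM := d.xi_pos 1 ⟨zero_le_one, le_rfl⟩
  have hG1 : ∀ {r s : ℝ}, r ≤ s → d.G 0 1 r s = d.xi r * (s ^ (n + 2) * d.zeta s) := by
    intro r s h
    simp [GreenData.G, GreenData.xiI, GreenData.zetaI, h]; ring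
  -- The closed condition `s ≤ r` is allowed since both formulas agree on the diagonal.
  have hG2 : ∀ {r s : ℝ}, s ≤ r → d.G 0 1 r s = s ^ (n + 2) * d.xi s * d.zeta r := by
    intro r s h
    rcases h.eq_or_lt with rfl | h
    · rw [hG1 le_rfl]; ring
    · simp [GreenData.G, GreenData.xiI, GreenData.zetaI, h.not_ge]
  set C := d.xi 1 * A + B + 1 with hC
  have hup : ∀ r ∈ Set.Icc (0:ℝ) 1, ∀ s t : ℝ, 0 < s → r ≤ s → s ≤ t → t ≤ 1 →
      |d.G 0 1 r t - d.G 0 1 r s| ≤ C * (t - s) := by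
    intro r hr s t hs hrs hst ht
    have hxi := d.xi_pos r hr
    have hxi1 : d.xi r ≤ d.xi 1 := d.xi_mono.monotoneOn hr ⟨zero_le_one, le_rfl⟩ hr.2
    have hts : 0 ≤ t - s := sub_nonneg.2 hst
    rw [hG1 hrs, hG1 (hrs.trans hst), ← mul_sub, abs_mul, abs_of_pos hxi]
    calc _ ≤ d.xi 1 * (A * (t - s)) :=
          mul_le_mul hxi1 (hA s t hs hst ht) (abs_nonneg _) hM.le
      _ ≤ C * (t - s) := by rw [hC]; nlinarith [mul_nonneg hB0 hts]
  have hlow : ∀ r ∈ Set.Icc (0:ℝ) 1, ∀ s t : ℝ, 0 < s → s ≤ t → t ≤ r →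
      |d.G 0 1 r t - d.G 0 1 r s| ≤ C * (t - s) := by
    intro r hr s t hs hst htr
    have hts : 0 ≤ t - s := sub_nonneg.2 hst
    rw [hG2 htr, hG2 (hst.trans htr)]
    refine (hB s t r hs hst htr hr.2).trans ?_
    refine mul_le_mul_of_nonneg_right ?_ hts
    rw [hC]; nlinarith [mul_nonneg hM.le hA0]
  have key : ∀ r ∈ Set.Icc (0:ℝ) 1, ∀ s t : ℝ, 0 < s → s ≤ t → t ≤ 1 →
      |d.G 0 1 r t - d.G 0 1 r s| ≤ C * (t - s) := by
    intro r hr s t hs hst ht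
    rcases le_total r s with h | h
    · exact hup r hr s t hs h hst ht
    rcases le_total t r with h' | h'
    · exact hlow r hr s t hs hst h'
    have h1 := hlow r hr s r hs h le_rfl
    have h2 := hup r hr r t (hs.trans_le h) le_rfl h' ht
    have h3 := abs_sub_le (d.G 0 1 r t) (d.G 0 1 r r) (d.G 0 1 r s)
    linarith
  refine ⟨C, by positivity, fun r hr s hs t ht => ?_⟩
  rcases le_total s t with h | h
  · rw [abs_sub_comm, abs_sub_comm s t, abs_of_nonneg (sub_nonneg.2 h)]
    exact key r hr s t hs.1 h ht.2
  · rw [abs_of_nonneg (sub_nonneg.2 h)]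
    exact key r hr t s ht.1 h hs.2
end
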